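/- arXiv:1112.4294 — 7 statements merged into one kernel-verified Lean document; each statement's English description precedes it below -/
import Mathlib

section
/- Let n ≥ 1, A ∈ ℝ^{n×n} arbitrary, B ∈ ℝ^{n×n} diagonal and invertible, D ∈ ℝ^{n×n} diagonal, and x0, w0 ∈ ℝⁿ. Consider the closed loop with the deadbeat controller: x_K(0) = 0, x_K(k+1) = D x_K(k) − B^{-1}D² x(k), u(k) = x_K(k) − B^{-1}(A+D) x(k), together with x(0) = x0, w(0) = w0, x(k+1) = A x(k) + B(u(k) + w(k)), w(k+1) = D w(k). Then for every k ≥ 2, x(k) = 0 and u(k) + w(k) = 0; in particular the closed-loop state reaches the origin in two time steps regardless of x0 and w0. -/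
open Matrix

/-- **Deadbeat property (Definition 3).** With the deadbeat controller
`x_K(0) = 0`, `x_K(k+1) = D x_K(k) − B⁻¹D² x(k)`, `u(k) = x_K(k) − B⁻¹(A+D) x(k)`
in closed loop with `x(k+1) = A x(k) + B(u(k) + w(k))`, `w(k+1) = D w(k)`,
the closed-loop state reaches the origin in two time steps: for all `k ≥ 2`,
`x(k) = 0` and `u(k) + w(k) = 0`, regardless of `x0` and `w0`. -/
theorem deadbeat_two_steps (n : ℕ) (hn : 1 ≤ n)
    (A B D : Matrix (Fin n) (Fin n) ℝ)
    (hBdiag : B.IsDiag) (hBinv : IsUnit B.det) (hDdiag : D.IsDiag)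
    (x0 w0 : Fin n → ℝ)
    (x w xK u : ℕ → Fin n → ℝ)
    (hx0 : x 0 = x0) (hw0 : w 0 = w0) (hxK0 : xK 0 = 0)
    (hxK : ∀ k, xK (k + 1) = D.mulVec (xK k) - (B⁻¹ * D ^ 2).mulVec (x k))
    (hu : ∀ k, u k = xK k - (B⁻¹ * (A + D)).mulVec (x k))
    (hx : ∀ k, x (k + 1) = A.mulVec (x k) + B.mulVec (u k + w k))
    (hw : ∀ k, w (k + 1) = D.mulVec (w k)) :
    ∀ k, 2 ≤ k → x k = 0 ∧ u k + w k = 0 := by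
  have hcomm : B * D = D * B := by
    rw [← hBdiag.diagonal_diag, ← hDdiag.diagonal_diag, diagonal_mul_diagonal,
      diagonal_mul_diagonal]
    congr 1
    funext i
    exact mul_comm _ _
  have hB : B * B⁻¹ = 1 := Matrix.mul_nonsing_inv B hBinv
  have hB' : B⁻¹ * B = 1 := Matrix.nonsing_inv_mul B hBinv
  have hstep : ∀ k, x (k + 1) = B.mulVec (xK k + w k) - D.mulVec (x k) := by
    intro k
    rw [hx, hu]
    simp only [mulVec_add, mulVec_sub, mulVec_mulVec, ← Matrix.mul_assoc, hB, Matrix.one_mul,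
      add_mulVec]
    abel
  have hzero : ∀ k, x (k + 2) = 0 := by
    intro k
    rw [hstep (k + 1), hstep k, hxK, hw]
    simp only [mulVec_add, mulVec_sub, mulVec_mulVec, ← Matrix.mul_assoc, hB, Matrix.one_mul,
      hcomm, pow_two]
    abel
  intro k hk
  obtain ⟨m, rfl⟩ := Nat.exists_eq_add_of_le' hk
  refine ⟨hzero m, ?_⟩
  have h := hx (m + 2)
  rw [hzero m, show m + 2 + 1 = (m + 1) + 2 from rfl, hzero (m + 1), mulVec_zero, zero_add] at h
  have h2 := congrArg (B⁻¹).mulVec h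
  rw [mulVec_zero, mulVec_mulVec, hB', one_mulVec] at h2
  exact h2.symm
end

section
/- Let n ≥ 1, A ∈ ℝ^{n×n} arbitrary, B ∈ ℝ^{n×n} diagonal and invertible, D ∈ ℝ^{n×n} diagonal, and x0, w0 ∈ ℝⁿ. For the closed loop with the deadbeat controller (x_K(0)=0, x_K(k+1)=D x_K(k) − B^{-1}D² x(k), u(k)=x_K(k) − B^{-1}(A+D)x(k), x(0)=x0, w(0)=w0, x(k+1)=Ax(k)+B(u(k)+w(k)), w(k+1)=Dw(k)), the cost Σ_{k=0}^∞ (‖x(k)‖² + ‖u(k)+w(k)‖²) equals [x0; Bw0]ᵀ [[Q11, Q12],[Q12ᵀ, Q22]] [x0; Bw0], where Q11 = I + D²(I + B^{-2}) + AᵀB^{-2}A + DAᵀB^{-2}AD + AᵀB^{-2}D + DB^{-2}A, Q12 = −D − AᵀB^{-2} − DB^{-2} − DAᵀB^{-2}A, and Q22 = AᵀB^{-2}A + B^{-2} + I. -/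
open Matrix
open scoped ENNReal

/-- Moving a matrix across the dot product. -/
theorem dp_aux {n : ℕ} (M N : Matrix (Fin n) (Fin n) ℝ) (a b : Fin n → ℝ) :
    a ⬝ᵥ (Mᵀ * N) *ᵥ b = (M *ᵥ a) ⬝ᵥ (N *ᵥ b) := by
  rw [← Matrix.mulVec_mulVec, Matrix.dotProduct_mulVec, Matrix.vecMul_transpose]

theorem diag_comm_aux {n : ℕ} {M N : Matrix (Fin n) (Fin n) ℝ} (hM : M.IsDiag)
    (hN : N.IsDiag) : M * N = N * M := by
  rw [← hM.diagonal_diag, ← hN.diagonal_diag, Matrix.diagonal_mul_diagonal,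
    Matrix.diagonal_mul_diagonal]
  congr 1
  funext i
  exact mul_comm _ _

/-- **Cost of the deadbeat controller (Definition 3).** For the closed loop with the deadbeat
controller, the cost `Σ_{k=0}^∞ (‖x(k)‖² + ‖u(k)+w(k)‖²)` equals
`[x0; Bw0]ᵀ [[Q11, Q12],[Q12ᵀ, Q22]] [x0; Bw0]` with `Q11, Q12, Q22` as in (16)–(18). -/
theorem deadbeat_cost_formula (n : ℕ) (hn : 1 ≤ n)
    (A B D : Matrix (Fin n) (Fin n) ℝ)
    (hBdiag : B.IsDiag) (hBinv : IsUnit B.det) (hDdiag : D.IsDiag)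
    (x0 w0 : Fin n → ℝ)
    (x w xK u : ℕ → Fin n → ℝ)
    (hx0 : x 0 = x0) (hw0 : w 0 = w0) (hxK0 : xK 0 = 0)
    (hxK : ∀ k, xK (k + 1) = D.mulVec (xK k) - (B⁻¹ * D ^ 2).mulVec (x k))
    (hu : ∀ k, u k = xK k - (B⁻¹ * (A + D)).mulVec (x k))
    (hx : ∀ k, x (k + 1) = A.mulVec (x k) + B.mulVec (u k + w k))
    (hw : ∀ k, w (k + 1) = D.mulVec (w k))
    (Q11 Q12 Q22 : Matrix (Fin n) (Fin n) ℝ)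
    (hQ11 : Q11 = 1 + D ^ 2 * (1 + B⁻¹ ^ 2) + Aᵀ * B⁻¹ ^ 2 * A
        + D * Aᵀ * B⁻¹ ^ 2 * A * D + Aᵀ * B⁻¹ ^ 2 * D + D * B⁻¹ ^ 2 * A)
    (hQ12 : Q12 = -D - Aᵀ * B⁻¹ ^ 2 - D * B⁻¹ ^ 2 - D * Aᵀ * B⁻¹ ^ 2 * A)
    (hQ22 : Q22 = Aᵀ * B⁻¹ ^ 2 * A + B⁻¹ ^ 2 + 1) :
    (∑' k : ℕ, ENNReal.ofReal ((∑ i, (x k i) ^ 2) + ∑ i, (u k i + w k i) ^ 2))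
      = ENNReal.ofReal
          ((Sum.elim x0 (B.mulVec w0)) ⬝ᵥ
            ((Matrix.fromBlocks Q11 Q12 Q12ᵀ Q22).mulVec (Sum.elim x0 (B.mulVec w0)))) := by
  have hBB : B * B⁻¹ = 1 := Matrix.mul_nonsing_inv B hBinv
  have hCB : B⁻¹ * B = 1 := Matrix.nonsing_inv_mul B hBinv
  have hDT : Dᵀ = D := hDdiag.isSymm
  have hBD : B * D = D * B := diag_comm_aux hBdiag hDdiag
  have hCT : (B⁻¹)ᵀ = B⁻¹ := by
    rw [Matrix.transpose_nonsing_inv, hBdiag.isSymm]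
  have hCD : B⁻¹ * D = D * B⁻¹ := by
    calc B⁻¹ * D = B⁻¹ * (D * B) * B⁻¹ := by
            rw [Matrix.mul_assoc, Matrix.mul_assoc, hBB, Matrix.mul_one]
      _ = D * B⁻¹ := by
            rw [← hBD, ← Matrix.mul_assoc, hCB, Matrix.one_mul]
  have hx1 : ∀ k, x (k + 1) = B *ᵥ xK k - D *ᵥ x k + B *ᵥ w k := by
    intro k
    rw [hx, hu, Matrix.mulVec_add, Matrix.mulVec_sub, Matrix.mulVec_mulVec,
      ← Matrix.mul_assoc, hBB, Matrix.one_mul, Matrix.add_mulVec]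
    abel
  have hx2 : ∀ k, x (k + 2) = 0 := by
    intro k
    rw [hx1 (k + 1), hxK, hw, Matrix.mulVec_sub, Matrix.mulVec_mulVec, Matrix.mulVec_mulVec,
      Matrix.mulVec_mulVec, ← Matrix.mul_assoc, hBB, Matrix.one_mul, hBD, hx1 k,
      Matrix.mulVec_add, Matrix.mulVec_sub, Matrix.mulVec_mulVec, Matrix.mulVec_mulVec,
      Matrix.mulVec_mulVec, pow_two]
    abel
  have huw : ∀ k, u k + w k = B⁻¹ *ᵥ (x (k + 1) - A *ᵥ x k) := by
    intro k
    rw [hx k, add_sub_cancel_left, Matrix.mulVec_mulVec, hCB, Matrix.one_mulVec]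
  have hcost : ∀ k, (∑ i, (x k i) ^ 2) + ∑ i, (u k i + w k i) ^ 2
      = x k ⬝ᵥ x k + (u k + w k) ⬝ᵥ (u k + w k) := by
    intro k
    simp [dotProduct, pow_two]
  have hnn : ∀ a : Fin n → ℝ, 0 ≤ a ⬝ᵥ a := fun a =>
    Finset.sum_nonneg fun i _ => mul_self_nonneg (a i)
  simp_rw [hcost]
  rw [tsum_eq_sum (s := Finset.range 2)]
  swap
  · intro k hk
    obtain ⟨j, rfl⟩ : ∃ j, k = j + 2 := ⟨k - 2, by simp at hk; omega⟩
    rw [huw, hx2 j, show j + 2 + 1 = (j + 1) + 2 by ring, hx2 (j + 1)]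
    simp
  rw [Finset.sum_range_succ, Finset.sum_range_one,
    ← ENNReal.ofReal_add (add_nonneg (hnn _) (hnn _)) (add_nonneg (hnn _) (hnn _))]
  congr 1
  rw [huw 0, huw 1, hx2 0, hx1 0, hxK0, hx0, hw0]
  generalize B *ᵥ w0 = v
  have h11 : Q11 = 1 + Dᵀ * D + (B⁻¹ * D + B⁻¹ * A)ᵀ * (B⁻¹ * D + B⁻¹ * A)
      + (B⁻¹ * A * D)ᵀ * (B⁻¹ * A * D) := by
    have e : D * B⁻¹ * (B⁻¹ * D) = D ^ 2 * B⁻¹ ^ 2 := by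
      rw [hCD, pow_two, pow_two]
      simp only [Matrix.mul_assoc]
      rw [← Matrix.mul_assoc B⁻¹ D, hCD]
      simp only [Matrix.mul_assoc]
    rw [hQ11]
    simp only [Matrix.transpose_add, Matrix.transpose_mul, hDT, hCT, Matrix.add_mul,
      Matrix.mul_add, e, Matrix.mul_one]
    simp only [pow_two, Matrix.mul_assoc]
    abel
  have h12 : Q12 = -(Dᵀ * 1) - (B⁻¹ * D + B⁻¹ * A)ᵀ * B⁻¹ - (B⁻¹ * A * D)ᵀ * (B⁻¹ * A) := by
    rw [hQ12]
    simp only [Matrix.transpose_add, Matrix.transpose_mul, hDT, hCT, Matrix.add_mul,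
      Matrix.mul_one, pow_two, Matrix.mul_assoc]
    abel
  have h22 : Q22 = (B⁻¹ * A)ᵀ * (B⁻¹ * A) + (B⁻¹)ᵀ * B⁻¹ + 1 := by
    rw [hQ22]
    simp only [Matrix.transpose_mul, hCT, pow_two, Matrix.mul_assoc]
  have e21 : v ⬝ᵥ Q12ᵀ *ᵥ x0 = x0 ⬝ᵥ Q12 *ᵥ v := by
    rw [Matrix.dotProduct_mulVec, Matrix.vecMul_transpose, dotProduct_comm]
  rw [Matrix.fromBlocks_mulVec, sumElim_dotProduct_sumElim]
  simp only [Sum.elim_comp_inl, Sum.elim_comp_inr, dotProduct_add]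
  rw [e21, h11, h12, h22]
  simp only [Matrix.add_mulVec, Matrix.sub_mulVec, Matrix.neg_mulVec, dotProduct_add,
    dotProduct_sub, dotProduct_neg, dp_aux, Matrix.one_mulVec]
  simp only [Matrix.mulVec_add, Matrix.mulVec_sub, Matrix.mulVec_zero, zero_sub, zero_add,
    Matrix.mulVec_neg, Matrix.mulVec_mulVec, Matrix.add_mulVec, Matrix.mul_assoc,
    dotProduct_add, dotProduct_sub, dotProduct_neg,
    add_dotProduct, sub_dotProduct, neg_dotProduct, dotProduct_zero, zero_dotProduct]
  simp only [dotProduct_comm v, dotProduct_comm (B⁻¹ *ᵥ v), dotProduct_comm ((B⁻¹ * A) *ᵥ v),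
    dotProduct_comm ((B⁻¹ * D) *ᵥ x0) ((B⁻¹ * A) *ᵥ x0)]
  ring
end

section
/- Let n ≥ 1 and ε_b > 0, and set β = (2ε_b² + 1 + √(4ε_b² + 1))/(2ε_b²). For every A ∈ ℝ^{n×n}, every diagonal B ∈ ℝ^{n×n} with |b_ii| ≥ ε_b for all i, and every diagonal D ∈ ℝ^{n×n}, the 2n×2n symmetric matrix [[βV11 − Q11, βV12 − Q12],[βV12ᵀ − Q12ᵀ, βV22 − Q22]] is positive semidefinite, where W = Aᵀ(I+B²)^{-1}A + I, V11 = W + D²B^{-2} + DWD, V12 = −D(W + B^{-2}), V22 = W + B^{-2}, Q11 = I + D²(I + B^{-2}) + AᵀB^{-2}A + DAᵀB^{-2}AD + AᵀB^{-2}D + DB^{-2}A, Q12 = −D − AᵀB^{-2} − DB^{-2} − DAᵀB^{-2}A, and Q22 = AᵀB^{-2}A + B^{-2} + I. -/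
open Matrix

/-- The scalar inequality, one coordinate at a time. -/
lemma deadbeat_scalar (e β b p q x z : ℝ) (he : 0 < e) (hb : e ≤ |b|)
    (hβ : β = (2 * e ^ 2 + 1 + Real.sqrt (4 * e ^ 2 + 1)) / (2 * e ^ 2)) :
    0 ≤ β * (x ^ 2 + z ^ 2 + (p ^ 2 + q ^ 2) * (1 + b ^ 2)⁻¹ + z ^ 2 * (b⁻¹ ^ 2))
      - (x ^ 2 + z ^ 2 + q ^ 2 * (b⁻¹ ^ 2) + (p - z) ^ 2 * (b⁻¹ ^ 2)) := by
  have hbb : e ^ 2 ≤ b ^ 2 := by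
    rw [← sq_abs b]; gcongr
  have he2 : 0 < e ^ 2 := by positivity
  have hb2 : 0 < b ^ 2 := by linarith
  have hb0 : b ≠ 0 := by rintro rfl; simp at hb2
  obtain ⟨g, rfl⟩ : ∃ g, β = g + 1 := ⟨β - 1, by ring⟩
  set s := Real.sqrt (4 * e ^ 2 + 1) with hs
  have hs2 : s ^ 2 = 4 * e ^ 2 + 1 := Real.sq_sqrt (by positivity)
  have hs0 : 0 ≤ s := Real.sqrt_nonneg _
  have hg : g = (1 + s) / (2 * e ^ 2) := by
    field_simp at hβ ⊢
    linarith
  have hg0 : 0 < g := by rw [hg]; positivity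
  have hroot : g ^ 2 * e ^ 2 = g + 1 := by
    rw [hg]; field_simp; nlinarith
  have hgb : g + 1 ≤ g ^ 2 * b ^ 2 := by
    rw [← hroot]; gcongr
  have hgb1 : 1 < g * b ^ 2 := by
    by_contra hcon
    push Not at hcon
    nlinarith
  have hu : 0 < g * b ^ 2 - 1 := by linarith
  have key : 0 ≤ (g * b ^ 2 - 1) * q ^ 2 + ((g * b ^ 2 - 1) * p ^ 2
      + 2 * (1 + b ^ 2) * p * z + g * (1 + b ^ 2) ^ 2 * z ^ 2) := by
    have h1 : 0 ≤ (g * b ^ 2 - 1) * p ^ 2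
      + 2 * (1 + b ^ 2) * p * z + g * (1 + b ^ 2) ^ 2 * z ^ 2 := by
      have h2 : 0 ≤ (g * b ^ 2 - 1) * ((g * b ^ 2 - 1) * p ^ 2
          + 2 * (1 + b ^ 2) * p * z + g * (1 + b ^ 2) ^ 2 * z ^ 2) := by
        have : (g * b ^ 2 - 1) * ((g * b ^ 2 - 1) * p ^ 2
          + 2 * (1 + b ^ 2) * p * z + g * (1 + b ^ 2) ^ 2 * z ^ 2)
          = ((g * b ^ 2 - 1) * p + (1 + b ^ 2) * z) ^ 2
            + (g ^ 2 * b ^ 2 - (g + 1)) * ((1 + b ^ 2) * z) ^ 2 := by ring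
        rw [this]
        have : 0 ≤ g ^ 2 * b ^ 2 - (g + 1) := by linarith
        positivity
      exact nonneg_of_mul_nonneg_right h2 hu
    positivity
  have : (g + 1) * (x ^ 2 + z ^ 2 + (p ^ 2 + q ^ 2) * (1 + b ^ 2)⁻¹ + z ^ 2 * (b⁻¹ ^ 2))
      - (x ^ 2 + z ^ 2 + q ^ 2 * (b⁻¹ ^ 2) + (p - z) ^ 2 * (b⁻¹ ^ 2))
      = g * x ^ 2 + ((g * b ^ 2 - 1) * q ^ 2 + ((g * b ^ 2 - 1) * p ^ 2
      + 2 * (1 + b ^ 2) * p * z + g * (1 + b ^ 2) ^ 2 * z ^ 2)) / (b ^ 2 * (1 + b ^ 2)) := by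
    have : 1 + b ^ 2 ≠ 0 := by positivity
    field_simp
    ring
  rw [this]
  positivity

/-- **Key matrix inequality in Lemma 3.** With `β = (2ε_b² + 1 + √(4ε_b² + 1))/(2ε_b²)`, for
every `A`, every diagonal `B` with `|b_ii| ≥ ε_b` and every diagonal `D`, the symmetric
matrix `[[βV11 − Q11, βV12 − Q12],[βV12ᵀ − Q12ᵀ, βV22 − Q22]]` is positive semidefinite,
i.e. `vᵀ M v ≥ 0` for all vectors `v`. -/
theorem deadbeat_quadratic_form_psd (n : ℕ) (hn : 1 ≤ n) (εb : ℝ) (hεb : 0 < εb)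
    (β : ℝ) (hβ : β = (2 * εb ^ 2 + 1 + Real.sqrt (4 * εb ^ 2 + 1)) / (2 * εb ^ 2))
    (A B D : Matrix (Fin n) (Fin n) ℝ)
    (hBdiag : B.IsDiag) (hB : ∀ i, εb ≤ |B i i|) (hDdiag : D.IsDiag)
    (W V11 V12 V22 Q11 Q12 Q22 : Matrix (Fin n) (Fin n) ℝ)
    (hW : W = Aᵀ * (1 + B ^ 2)⁻¹ * A + 1)
    (hV11 : V11 = W + D ^ 2 * B⁻¹ ^ 2 + D * W * D)
    (hV12 : V12 = -(D * (W + B⁻¹ ^ 2)))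
    (hV22 : V22 = W + B⁻¹ ^ 2)
    (hQ11 : Q11 = 1 + D ^ 2 * (1 + B⁻¹ ^ 2) + Aᵀ * B⁻¹ ^ 2 * A
        + D * Aᵀ * B⁻¹ ^ 2 * A * D + Aᵀ * B⁻¹ ^ 2 * D + D * B⁻¹ ^ 2 * A)
    (hQ12 : Q12 = -D - Aᵀ * B⁻¹ ^ 2 - D * B⁻¹ ^ 2 - D * Aᵀ * B⁻¹ ^ 2 * A)
    (hQ22 : Q22 = Aᵀ * B⁻¹ ^ 2 * A + B⁻¹ ^ 2 + 1) :
    ∀ v : Fin n ⊕ Fin n → ℝ,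
      0 ≤ v ⬝ᵥ ((Matrix.fromBlocks (β • V11 - Q11) (β • V12 - Q12)
          (β • V12ᵀ - Q12ᵀ) (β • V22 - Q22)).mulVec v) := by
  intro v
  obtain ⟨b, rfl⟩ : ∃ b, B = diagonal b := ⟨_, hBdiag.diagonal_diag.symm⟩
  obtain ⟨d, hd⟩ : ∃ d, D = diagonal d := ⟨_, hDdiag.diagonal_diag.symm⟩
  simp only [diagonal_apply_eq] at hB
  have hb0 : ∀ i, b i ≠ 0 := fun i h => by
    have := hB i
    rw [h, abs_zero] at this
    linarith
  have hC : ((diagonal b)⁻¹ ^ 2 : Matrix (Fin n) (Fin n) ℝ) = diagonal (fun i => (b i)⁻¹ ^ 2) := by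
    have : (diagonal b)⁻¹ = diagonal (fun i => (b i)⁻¹) := by
      apply Matrix.inv_eq_right_inv
      rw [diagonal_mul_diagonal, ← diagonal_one]
      congr 1; ext i; exact mul_inv_cancel₀ (hb0 i)
    rw [this, diagonal_pow]; rfl
  have hE : (1 + (diagonal b) ^ 2 : Matrix (Fin n) (Fin n) ℝ)⁻¹
      = diagonal (fun i => (1 + b i ^ 2)⁻¹) := by
    apply Matrix.inv_eq_right_inv
    rw [diagonal_pow, ← diagonal_one, diagonal_add, diagonal_mul_diagonal]
    congr 1; ext i
    exact mul_inv_cancel₀ (by simp only [Pi.pow_apply]; positivity)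
  rw [hC] at hV11 hV12 hV22 hQ11 hQ12 hQ22
  rw [hE] at hW
  obtain ⟨x, y, rfl⟩ : ∃ x y, v = Sum.elim x y :=
    ⟨v ∘ Sum.inl, v ∘ Sum.inr, (Sum.elim_comp_inl_inr v).symm⟩
  have hDT : Dᵀ = D := by rw [hd, diagonal_transpose]
  have hDx : ∀ (u : Fin n → ℝ) i, (D *ᵥ u) i = d i * u i := fun u i => by
    rw [hd, mulVec_diagonal]
  have adjD : ∀ u w : Fin n → ℝ, u ⬝ᵥ (D *ᵥ w) = (D *ᵥ u) ⬝ᵥ w := fun u w => by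
    rw [dotProduct_mulVec, ← mulVec_transpose, hDT]
  have adjA : ∀ u w : Fin n → ℝ, u ⬝ᵥ (Aᵀ *ᵥ w) = (A *ᵥ u) ⬝ᵥ w := fun u w => by
    rw [dotProduct_mulVec, vecMul_transpose]
  have hAz : A *ᵥ (y - D *ᵥ x) = A *ᵥ y - A *ᵥ (D *ᵥ x) := mulVec_sub _ _ _
  have main : Sum.elim x y ⬝ᵥ ((Matrix.fromBlocks (β • V11 - Q11) (β • V12 - Q12)
          (β • V12ᵀ - Q12ᵀ) (β • V22 - Q22)).mulVec (Sum.elim x y))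
      = ∑ i, (β * (x i ^ 2 + (y i - d i * x i) ^ 2
          + ((A *ᵥ x) i ^ 2 + ((A *ᵥ y) i - (A *ᵥ (D *ᵥ x)) i) ^ 2) * (1 + b i ^ 2)⁻¹
          + (y i - d i * x i) ^ 2 * ((b i)⁻¹ ^ 2))
      - (x i ^ 2 + (y i - d i * x i) ^ 2
        + ((A *ᵥ y) i - (A *ᵥ (D *ᵥ x)) i) ^ 2 * ((b i)⁻¹ ^ 2)
        + ((A *ᵥ x) i - (y i - d i * x i)) ^ 2 * ((b i)⁻¹ ^ 2))) := by
    rw [fromBlocks_mulVec, sumElim_dotProduct_sumElim, hV11, hV12, hV22, hQ11, hQ12, hQ22, hW]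
    simp only [Sum.elim_comp_inl, Sum.elim_comp_inr, transpose_neg, transpose_sub, transpose_add,
      transpose_mul, transpose_one, transpose_transpose, hDT, diagonal_transpose, pow_two D,
      Matrix.mul_add, Matrix.add_mul, Matrix.mul_one, Matrix.one_mul, Matrix.mul_assoc,
      add_mulVec, sub_mulVec, neg_mulVec, smul_mulVec, ← mulVec_mulVec, one_mulVec,
      dotProduct_add, dotProduct_sub, dotProduct_neg, dotProduct_smul, adjA]
    simp only [adjD, adjA]
    simp only [dotProduct, mulVec_diagonal, hDx, smul_eq_mul, Finset.mul_sum,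
      ← Finset.sum_add_distrib, ← Finset.sum_sub_distrib, ← Finset.sum_neg_distrib]
    refine Finset.sum_congr rfl fun i _ => ?_
    ring
  rw [main]
  exact Finset.sum_nonneg fun i _ => deadbeat_scalar εb β (b i) _ _ _ _ hεb (hB i) hβ
end

section
/- Let ε > 0 and set β = (2ε² + 1 + √(4ε² + 1))/(2ε²). Then β ≥ 1 + 1/ε², and for every real b with b² ≥ ε², β/(1 + b²) − 1/b² − 1/((β − 1)·b²·(1 + b²)) ≥ 0. -/
/-- Let `ε > 0` and `β = (2ε² + 1 + √(4ε² + 1))/(2ε²)`. Then `β ≥ 1 + 1/ε²`, and for every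
real `b` with `b² ≥ ε²`, `β/(1 + b²) − 1/b² − 1/((β − 1)·b²·(1 + b²)) ≥ 0`. -/
theorem beta_scalar_inequalities (ε : ℝ) (hε : 0 < ε) (β : ℝ)
    (hβ : β = (2 * ε ^ 2 + 1 + Real.sqrt (4 * ε ^ 2 + 1)) / (2 * ε ^ 2)) :
    1 + 1 / ε ^ 2 ≤ β ∧
      ∀ b : ℝ, ε ^ 2 ≤ b ^ 2 →
        0 ≤ β / (1 + b ^ 2) - 1 / b ^ 2 - 1 / ((β - 1) * b ^ 2 * (1 + b ^ 2)) := by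
  have he : 0 < ε ^ 2 := by positivity
  have hs : Real.sqrt (4 * ε ^ 2 + 1) ^ 2 = 4 * ε ^ 2 + 1 := Real.sq_sqrt (by positivity)
  have hs1 : 1 ≤ Real.sqrt (4 * ε ^ 2 + 1) := Real.one_le_sqrt.mpr (by linarith)
  set s := Real.sqrt (4 * ε ^ 2 + 1) with hsdef
  obtain ⟨g, hg⟩ : ∃ g, g = (1 + s) / (2 * ε ^ 2) := ⟨_, rfl⟩
  have hβg : β = 1 + g := by
    rw [hβ, hg]
    field_simp
    ring
  have hg0 : 0 < g := by
    rw [hg]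
    positivity
  have hgs : 2 * (ε ^ 2 * g) = 1 + s := by
    rw [hg]
    field_simp
  have hq : ε ^ 2 * g ^ 2 = g + 1 := by
    have h1 : (2 * (ε ^ 2 * g) - 1) ^ 2 = 4 * ε ^ 2 + 1 := by
      rw [hgs, ← hs]
      ring
    have h2 : ε ^ 2 * (ε ^ 2 * g ^ 2) = ε ^ 2 * (g + 1) := by linarith
    exact mul_left_cancel₀ he.ne' h2
  subst hβg
  refine ⟨?_, ?_⟩
  · have : 1 / ε ^ 2 ≤ g := by
      rw [div_le_iff₀ he]
      linarith
    linarith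
  · intro b hb
    have hb0 : 0 < b ^ 2 := lt_of_lt_of_le he hb
    have hbne : b ≠ 0 := by
      rintro rfl
      simp at hb0
    have hb1 : 0 < 1 + b ^ 2 := by linarith
    have key : (1 + g) / (1 + b ^ 2) - 1 / b ^ 2 - 1 / ((1 + g - 1) * b ^ 2 * (1 + b ^ 2))
        = (g ^ 2 * b ^ 2 - g - 1) / (g * b ^ 2 * (1 + b ^ 2)) := by
      rw [add_sub_cancel_left]
      field_simp
      ring
    rw [key]
    apply div_nonneg
    · have := mul_le_mul_of_nonneg_left hb (sq_nonneg g)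
      linarith
    · positivity
end

section
/- Let n ≥ 1, A ∈ ℝ^{n×n}, B ∈ ℝ^{n×n} diagonal and invertible, D ∈ ℝ^{n×n} diagonal. Define Ã = [[A, B],[0, D]] ∈ ℝ^{2n×2n} and B̃ = [[0],[I]] ∈ ℝ^{2n×n}, and for ρ > 0 define X₁(ρ) = Ãᵀ(I + ρ^{-1}B̃B̃ᵀ)^{-1}Ã + I. Then, as ρ tends to 0 from the right, the matrix X₁(ρ) − X₁(ρ)B̃(ρI + B̃ᵀX₁(ρ)B̃)^{-1}B̃ᵀX₁(ρ) converges to the block-diagonal matrix [[W, 0],[0, 0]], where W = Aᵀ(I + B²)^{-1}A + I. -/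
open Matrix Filter Topology

/-- **Limit computation in the proof of Lemma 2.** For `ρ > 0`, let
`X₁(ρ) = Ãᵀ(I + ρ⁻¹B̃B̃ᵀ)⁻¹Ã + I` with `Ã = [[A, B],[0, D]]`, `B̃ = [[0],[I]]`. Then
`X₁(ρ) − X₁(ρ)B̃(ρI + B̃ᵀX₁(ρ)B̃)⁻¹B̃ᵀX₁(ρ) → [[W, 0],[0, 0]]` as `ρ → 0⁺`,
where `W = Aᵀ(I + B²)⁻¹A + I`. -/
theorem riccati_limit (n : ℕ) (hn : 1 ≤ n)
    (A B D : Matrix (Fin n) (Fin n) ℝ)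
    (hBdiag : B.IsDiag) (hBinv : IsUnit B.det) (hDdiag : D.IsDiag)
    (Atil : Matrix (Fin n ⊕ Fin n) (Fin n ⊕ Fin n) ℝ)
    (hAtil : Atil = Matrix.fromBlocks A B 0 D)
    (Btil : Matrix (Fin n ⊕ Fin n) (Fin n) ℝ)
    (hBtil : Btil = Matrix.fromRows (0 : Matrix (Fin n) (Fin n) ℝ) (1 : Matrix (Fin n) (Fin n) ℝ))
    (X₁ : ℝ → Matrix (Fin n ⊕ Fin n) (Fin n ⊕ Fin n) ℝ)
    (hX₁ : ∀ ρ : ℝ, X₁ ρ = Atilᵀ * (1 + ρ⁻¹ • (Btil * Btilᵀ))⁻¹ * Atil + 1) :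
    Tendsto
      (fun ρ : ℝ =>
        X₁ ρ - X₁ ρ * Btil * (ρ • (1 : Matrix (Fin n) (Fin n) ℝ) + Btilᵀ * X₁ ρ * Btil)⁻¹
          * Btilᵀ * X₁ ρ)
      (nhdsWithin 0 (Set.Ioi 0))
      (nhds (Matrix.fromBlocks (Aᵀ * (1 + B ^ 2)⁻¹ * A + 1) 0 0 0)) := by
  have hBT : Bᵀ = B := by
    ext i j
    by_cases h : i = j
    · subst h; rfl
    · rw [transpose_apply, hBdiag h, hBdiag (Ne.symm h)]
  have hM : IsUnit (B * B + 1).det := by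
    have h1 : (Bᵀ * B + 1).PosDef := by
      have h2 : (Bᵀ * B).PosSemidef := by
        simpa using Matrix.posSemidef_conjTranspose_mul_self B
      exact Matrix.PosDef.posSemidef_add h2 Matrix.PosDef.one
    rw [hBT] at h1
    exact h1.det_pos.ne'.isUnit
  have hM1 : (B * B + 1) * (B * B + 1)⁻¹ = 1 := Matrix.mul_nonsing_inv _ hM
  -- the explicit form of `X₁`
  let G : ℝ → Matrix (Fin n ⊕ Fin n) (Fin n ⊕ Fin n) ℝ := fun ρ =>
    Atilᵀ * fromBlocks 1 0 0 ((ρ * (1 + ρ)⁻¹) • (1 : Matrix (Fin n) (Fin n) ℝ)) * Atil + 1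
  have hG : ∀ ρ : ℝ, 0 < ρ → X₁ ρ = G ρ := by
    intro ρ hρ
    rw [hX₁]
    have : (1 + ρ⁻¹ • (Btil * Btilᵀ))⁻¹
        = fromBlocks 1 0 0 ((ρ * (1 + ρ)⁻¹) • (1 : Matrix (Fin n) (Fin n) ℝ)) := by
      apply Matrix.inv_eq_right_inv
      rw [hBtil, transpose_fromRows, fromRows_mul_fromCols, ← fromBlocks_one, fromBlocks_smul,
        fromBlocks_add, fromBlocks_multiply]
      have h3 : (1 : Matrix (Fin n) (Fin n) ℝ) + ρ⁻¹ • 1 = (1 + ρ⁻¹) • 1 := by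
        rw [add_smul, one_smul]
      have h4 : ρ * (1 + ρ)⁻¹ * (1 + ρ⁻¹) = 1 := by
        field_simp
        try ring
      simp [h3, smul_smul, h4]
    rw [this]
  have hG0 : G 0 = fromBlocks (Aᵀ * A + 1) (Aᵀ * B) (B * A) (B * B + 1) := by
    simp only [G]
    rw [hAtil, ← fromBlocks_one, fromBlocks_transpose, fromBlocks_multiply, fromBlocks_multiply,
      fromBlocks_one, ← fromBlocks_one, fromBlocks_add]
    simp [hBT]
  have hGB : Btilᵀ * G 0 * Btil = B * B + 1 := by
    rw [hG0, hBtil, transpose_fromRows, fromCols_mul_fromBlocks, fromCols_mul_fromRows]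
    simp
  have hGc : ContinuousAt G 0 := by
    have hc : ContinuousAt (fun ρ : ℝ => ρ * (1 + ρ)⁻¹) 0 :=
      continuousAt_id.mul ((continuousAt_const.add continuousAt_id).inv₀ (by simp))
    have hK : Continuous (fun c : ℝ => Atilᵀ * fromBlocks 1 0 0
        (c • (1 : Matrix (Fin n) (Fin n) ℝ)) * Atil + 1) := by
      refine Continuous.add (Continuous.matrix_mul (Continuous.matrix_mul continuous_const ?_)
        continuous_const) continuous_const
      exact Continuous.matrix_fromBlocks continuous_const continuous_const continuous_const
        (continuous_id.smul continuous_const)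
    exact ContinuousAt.comp (f := fun ρ : ℝ => ρ * (1 + ρ)⁻¹) hK.continuousAt hc
  have hmul : ∀ {a b c : Type} [Fintype b] (f : ℝ → Matrix a b ℝ) (g : ℝ → Matrix b c ℝ),
      ContinuousAt f 0 → ContinuousAt g 0 → ContinuousAt (fun r => f r * g r) 0 := by
    intro a b c _ f g hf hg
    have : Continuous (fun p : Matrix a b ℝ × Matrix b c ℝ => p.1 * p.2) :=
      continuous_fst.matrix_mul continuous_snd
    exact ContinuousAt.comp (f := fun r => (f r, g r)) this.continuousAt (hf.prodMk hg)
  have hH : ContinuousAt (fun ρ : ℝ => (ρ • (1 : Matrix (Fin n) (Fin n) ℝ)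
      + Btilᵀ * G ρ * Btil)) 0 :=
    (continuousAt_id.smul continuousAt_const).add
      (hmul _ _ (hmul _ _ continuousAt_const hGc) continuousAt_const)
  have hI : ContinuousAt (fun ρ : ℝ => (ρ • (1 : Matrix (Fin n) (Fin n) ℝ)
      + Btilᵀ * G ρ * Btil)⁻¹) 0 := by
    refine ContinuousAt.comp (g := fun M : Matrix (Fin n) (Fin n) ℝ => M⁻¹)
      (f := fun ρ : ℝ => (ρ • (1 : Matrix (Fin n) (Fin n) ℝ) + Btilᵀ * G ρ * Btil)) ?_ hH
    apply continuousAt_matrix_inv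
    rw [zero_smul, zero_add, hGB, Ring.inverse_eq_inv']
    exact continuousAt_inv₀ hM.ne_zero
  have hF : ContinuousAt (fun ρ : ℝ => G ρ - G ρ * Btil *
      (ρ • (1 : Matrix (Fin n) (Fin n) ℝ) + Btilᵀ * G ρ * Btil)⁻¹ * Btilᵀ * G ρ) 0 :=
    hGc.sub (hmul _ _ (hmul _ _ (hmul _ _ (hmul _ _ hGc continuousAt_const) hI)
      continuousAt_const) hGc)
  have hW : (1 + B ^ 2)⁻¹ = 1 - B * (B * B + 1)⁻¹ * B := by
    apply Matrix.inv_eq_right_inv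
    have h5 : (1 + B ^ 2) * (1 - B * (B * B + 1)⁻¹ * B)
        = 1 + B * B - B * ((B * B + 1) * (B * B + 1)⁻¹) * B := by noncomm_ring
    rw [h5, hM1]; simp
  have hF0 : G 0 - G 0 * Btil *
      ((0 : ℝ) • (1 : Matrix (Fin n) (Fin n) ℝ) + Btilᵀ * G 0 * Btil)⁻¹ * Btilᵀ * G 0
      = fromBlocks (Aᵀ * (1 + B ^ 2)⁻¹ * A + 1) 0 0 0 := by
    have hM2 : (B * B + 1)⁻¹ * (B * B + 1) = 1 := Matrix.nonsing_inv_mul _ hM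
    rw [zero_smul, zero_add, hGB, hW]
    have hR : G 0 * Btil = fromRows (Aᵀ * B) (B * B + 1) := by
      rw [hG0, hBtil, fromBlocks_mul_fromRows]; simp
    have hL : Btilᵀ * G 0 = fromCols (B * A) (B * B + 1) := by
      rw [hG0, hBtil, transpose_fromRows, fromCols_mul_fromBlocks]; simp
    rw [Matrix.mul_assoc _ Btilᵀ, hR, hL, fromRows_mul, fromRows_mul_fromCols, hG0, hM1,
      Matrix.mul_assoc (Aᵀ * B) _ (B * B + 1), hM2, sub_eq_add_neg, fromBlocks_neg, fromBlocks_add]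
    congr 1
    · noncomm_ring
    · simp
    · simp
    · simp
  have hT := hF.tendsto
  rw [hF0] at hT
  refine (hT.mono_left nhdsWithin_le_nhds).congr' ?_
  filter_upwards [self_mem_nhdsWithin] with ρ hρ
  rw [hG ρ hρ]
end

section
/- Let n ≥ 1, let B, D ∈ ℝ^{n×n} be diagonal with B invertible, and let X11, X12, X22 ∈ ℝ^{n×n} with X11 symmetric, X22 symmetric and invertible, and suppose the sub-Riccati relation X22 − I = B X11 B − B X12 X22^{-1} X12ᵀ B holds. Then for all x0, w0 ∈ ℝⁿ, setting ξ0 = −(X22^{-1}X12ᵀ + DB^{-1})x0 + w0, one has [x0; ξ0]ᵀ [[X11, X12],[X12ᵀ, X22]] [x0; ξ0] = [x0; w0]ᵀ [[B^{-1}(X22 + D X22 D − I)B^{-1}, −B^{-1}D X22],[−X22 D B^{-1}, X22]] [x0; w0]. -/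
open Matrix

/-- **Identity (20) in the proof of Lemma 2.** Under the sub-Riccati relation
`X22 − I = B X11 B − B X12 X22⁻¹ X12ᵀ B`, setting `ξ0 = −(X22⁻¹X12ᵀ + DB⁻¹)x0 + w0`,
the quadratic form `[x0; ξ0]ᵀ [[X11, X12],[X12ᵀ, X22]] [x0; ξ0]` equals
`[x0; w0]ᵀ [[B⁻¹(X22 + D X22 D − I)B⁻¹, −B⁻¹D X22],[−X22 D B⁻¹, X22]] [x0; w0]`. -/
theorem riccati_quadratic_form_identity (n : ℕ) (hn : 1 ≤ n)
    (B D : Matrix (Fin n) (Fin n) ℝ)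
    (hBdiag : B.IsDiag) (hBinv : IsUnit B.det) (hDdiag : D.IsDiag)
    (X11 X12 X22 : Matrix (Fin n) (Fin n) ℝ)
    (hX11 : X11ᵀ = X11) (hX22 : X22ᵀ = X22) (hX22inv : IsUnit X22.det)
    (hRic : X22 - 1 = B * X11 * B - B * X12 * X22⁻¹ * X12ᵀ * B) :
    ∀ x0 w0 : Fin n → ℝ,
      (Sum.elim x0 (-(X22⁻¹ * X12ᵀ + D * B⁻¹).mulVec x0 + w0)) ⬝ᵥ
          ((Matrix.fromBlocks X11 X12 X12ᵀ X22).mulVec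
            (Sum.elim x0 (-(X22⁻¹ * X12ᵀ + D * B⁻¹).mulVec x0 + w0)))
        = (Sum.elim x0 w0) ⬝ᵥ
            ((Matrix.fromBlocks (B⁻¹ * (X22 + D * X22 * D - 1) * B⁻¹) (-(B⁻¹ * D * X22))
              (-(X22 * D * B⁻¹)) X22).mulVec (Sum.elim x0 w0)) := by
  intro x w
  have hBT : (B⁻¹)ᵀ = B⁻¹ := by rw [transpose_nonsing_inv, hBdiag.isSymm.eq]
  have hDT : Dᵀ = D := hDdiag.isSymm.eq
  have hcomm : B * D = D * B := by
    rw [← hBdiag.diagonal_diag, ← hDdiag.diagonal_diag, diagonal_mul_diagonal,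
      diagonal_mul_diagonal]
    congr 1; ext i; exact mul_comm _ _
  have hcomm' : B⁻¹ * D = D * B⁻¹ := by
    calc B⁻¹ * D = B⁻¹ * (D * B) * B⁻¹ := by
          rw [Matrix.mul_assoc, Matrix.mul_assoc, mul_nonsing_inv _ hBinv, Matrix.mul_one]
      _ = D * B⁻¹ := by
          rw [← hcomm, ← Matrix.mul_assoc, nonsing_inv_mul _ hBinv, Matrix.one_mul]
  have hS : X11 - X12 * X22⁻¹ * X12ᵀ = B⁻¹ * (X22 - 1) * B⁻¹ := by
    have h : X22 - 1 = B * (X11 - X12 * X22⁻¹ * X12ᵀ) * B := by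
      rw [hRic]; noncomm_ring
    rw [h, Matrix.mul_assoc B, ← Matrix.mul_assoc B⁻¹ B, nonsing_inv_mul _ hBinv,
      Matrix.one_mul, Matrix.mul_assoc _ B, mul_nonsing_inv _ hBinv, Matrix.mul_one]
  have hM : B⁻¹ * (X22 + D * X22 * D - 1) * B⁻¹
      = (X11 - X12 * X22⁻¹ * X12ᵀ) + (D * B⁻¹)ᵀ * X22 * (D * B⁻¹) := by
    rw [hS, transpose_mul, hBT, hDT]; noncomm_ring
  have hE : B⁻¹ * D = (D * B⁻¹)ᵀ := by rw [transpose_mul, hBT, hDT]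
  rw [hM, hE, Matrix.mul_assoc X22 D]
  clear hM hE hS
  generalize D * B⁻¹ = E
  have tr : ∀ (A : Matrix (Fin n) (Fin n) ℝ) (a b : Fin n → ℝ),
      a ⬝ᵥ (A *ᵥ b) = (Aᵀ *ᵥ a) ⬝ᵥ b := by
    intro A a b; rw [dotProduct_mulVec, mulVec_transpose]
  have hinv : ∀ v : Fin n → ℝ, X22 *ᵥ (X22⁻¹ *ᵥ v) = v := by
    intro v; rw [mulVec_mulVec, mul_nonsing_inv _ hX22inv, one_mulVec]
  have hY : (X22⁻¹)ᵀ = X22⁻¹ := by rw [transpose_nonsing_inv, hX22]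
  simp only [fromBlocks_mulVec, Sum.elim_comp_inl, Sum.elim_comp_inr, sumElim_dotProduct_sumElim,
    add_mulVec, sub_mulVec, neg_mulVec, mulVec_add, mulVec_neg, ← mulVec_mulVec, hinv,
    dotProduct_add, add_dotProduct, dotProduct_neg, neg_dotProduct, dotProduct_sub, neg_add]
  have e1 : ∀ b, x ⬝ᵥ (X12 *ᵥ b) = (X12ᵀ *ᵥ x) ⬝ᵥ b := fun b => tr _ _ _
  have e2 : ∀ b, x ⬝ᵥ (Eᵀ *ᵥ b) = (E *ᵥ x) ⬝ᵥ b := fun b => by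
    rw [tr, transpose_transpose]
  have e3 : ∀ a b, (X22⁻¹ *ᵥ a) ⬝ᵥ (X22 *ᵥ b) = a ⬝ᵥ b := fun a b => by
    rw [tr, hX22, hinv]
  simp only [e1, e2, e3]
  generalize X12ᵀ *ᵥ x = u
  generalize E *ᵥ x = e
  rw [dotProduct_comm w u, dotProduct_comm e u, dotProduct_comm (X22⁻¹ *ᵥ u) u]
  ring
end

section
/- Let n ≥ 2, ε_b > 0, and let S_P, S_K ∈ {0,1}^{n×n} be adjacency matrices such that the plant graph G_P has no isolated node, S_K ⊇ S_P entrywise with ones on the diagonal of S_K. Let i be a node that is not a sink of G_P (there exists ℓ ≠ i with (S_P)_{ℓ i} = 1). Let Γ be a limited-model-information control design strategy with totally disconnected design graph mapping into 𝒦(S_K). Suppose there exist A ∈ 𝒜(S_P), B diagonal with |b_kk| ≥ ε_b for all k, D diagonal, and an index j ≠ i such that a_{ij} + b_{ii}·(D_Γ)_{ij}(A,B,D) ≠ 0, where (D_Γ)_{ij}(A,B,D) is the (i,j) entry of the feedthrough matrix of Γ(A,B,D). Then the competitive ratio of Γ is unbounded: for every c > 0 there exist a plant P' = (A',B',D',x0',w0')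 with A' ∈ 𝒜(S_P), B' diagonal with |b'_kk| ≥ ε_b, D' diagonal, and a controller K ∈ 𝒦(S_K), such that J_{P'}(Γ(A',B',D')) > c · J_{P'}(K). -/
open Matrix
open scoped ENNReal

/-- State trajectory of the plant `x(k+1) = A x(k) + B (u(k) + w(k))`, `w(k) = D^k w0`. -/
noncomputable def xTraj {n : ℕ} (A B D : Matrix (Fin n) (Fin n) ℝ)
    (x0 w0 : Fin n → ℝ) (u : ℕ → Fin n → ℝ) : ℕ → (Fin n → ℝ)
  | 0 => x0
  | k + 1 => A.mulVec (xTraj A B D x0 w0 u k) + B.mulVec (u k + (D ^ k).mulVec w0)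

/-- Cost of a control sequence. -/
noncomputable def cost {n : ℕ} (A B D : Matrix (Fin n) (Fin n) ℝ)
    (x0 w0 : Fin n → ℝ) (u : ℕ → Fin n → ℝ) : ℝ≥0∞ :=
  ∑' k : ℕ, ENNReal.ofReal ((∑ i, (xTraj A B D x0 w0 u k i) ^ 2)
    + ∑ i, (u k i + (D ^ k).mulVec w0 i) ^ 2)

/-- A dynamic state-feedback controller. -/
structure Ctrl (n : ℕ) : Type 1 where
  σ : Type
  fin : Fintype σ
  dec : DecidableEq σ
  AK : Matrix σ σ ℝ
  BK : Matrix σ (Fin n) ℝ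
  CK : Matrix (Fin n) σ ℝ
  DK : Matrix (Fin n) (Fin n) ℝ

/-- Closed-loop state `(x(k), x_K(k))`. -/
noncomputable def clState {n : ℕ} (K : Ctrl n) (A B D : Matrix (Fin n) (Fin n) ℝ)
    (x0 w0 : Fin n → ℝ) : ℕ → (Fin n → ℝ) × (K.σ → ℝ)
  | 0 => (x0, 0)
  | k + 1 =>
      letI := K.fin
      (A.mulVec (clState K A B D x0 w0 k).1
          + B.mulVec ((K.CK.mulVec (clState K A B D x0 w0 k).2
              + K.DK.mulVec (clState K A B D x0 w0 k).1) + (D ^ k).mulVec w0),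
       K.AK.mulVec (clState K A B D x0 w0 k).2 + K.BK.mulVec (clState K A B D x0 w0 k).1)

/-- Control sequence generated by the controller in closed loop. -/
noncomputable def ctrlU {n : ℕ} (K : Ctrl n) (A B D : Matrix (Fin n) (Fin n) ℝ)
    (x0 w0 : Fin n → ℝ) (k : ℕ) : Fin n → ℝ :=
  letI := K.fin
  K.CK.mulVec (clState K A B D x0 w0 k).2 + K.DK.mulVec (clState K A B D x0 w0 k).1

/-- Closed-loop cost `J_P(K)`. -/
noncomputable def Jcost {n : ℕ} (K : Ctrl n) (A B D : Matrix (Fin n) (Fin n) ℝ)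
    (x0 w0 : Fin n → ℝ) : ℝ≥0∞ :=
  cost A B D x0 w0 (ctrlU K A B D x0 w0)

/-- Membership in the structured controller class `𝒦(S_K)`. -/
def memK {n : ℕ} (SK : Fin n → Fin n → Bool) (K : Ctrl n) : Prop :=
  letI := K.fin
  letI := K.dec
  ∀ i j, SK i j = false → K.DK i j = 0 ∧ ∀ t : ℕ, (K.CK * K.AK ^ t * K.BK) i j = 0

/-- A subcontroller (one block of a limited model information controller). -/
structure SubCtrl (n : ℕ) : Type 1 where
  σ : Type
  fin : Fintype σ
  dec : DecidableEq σ
  AK : Matrix σ σ ℝ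
  BK : Matrix σ (Fin n) ℝ
  CK : σ → ℝ
  DK : Fin n → ℝ

/-- Assembling `n` subcontrollers into one controller with block-diagonal `A_K` and `C_K`. -/
noncomputable def assemble {n : ℕ} (γ : Fin n → SubCtrl n) : Ctrl n where
  σ := Σ i : Fin n, (γ i).σ
  fin := letI : ∀ i, Fintype (γ i).σ := fun i => (γ i).fin; inferInstance
  dec := letI : ∀ i, DecidableEq (γ i).σ := fun i => (γ i).dec; inferInstance
  AK := Matrix.blockDiagonal' (fun i => (γ i).AK)
  BK := fun p j => (γ p.1).BK p.2 j
  CK := fun i q => if q.1 = i then (γ q.1).CK q.2 else 0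
  DK := fun i j => (γ i).DK j

/-- A limited model information control design strategy with totally disconnected design
graph: subcontroller `i` is a function of the `i`-th row of `A`, `b_ii` and `d_ii` only. -/
def Strat (n : ℕ) : Type 1 := Fin n → (Fin n → ℝ) → ℝ → ℝ → SubCtrl n

/-- The controller a strategy produces for the plant `(A, B, D)`. -/
noncomputable def applyStrat {n : ℕ} (Γ : Strat n) (A B D : Matrix (Fin n) (Fin n) ℝ) :
    Ctrl n :=
  assemble (fun i => Γ i (A i) (B i i) (D i i))

/-- Admissible plant data: `A ∈ 𝒜(S_P)`, `B` diagonal with `|b_ii| ≥ ε_b`, `D` diagonal. -/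
def Adm {n : ℕ} (SP : Fin n → Fin n → Bool) (εb : ℝ)
    (A B D : Matrix (Fin n) (Fin n) ℝ) : Prop :=
  (∀ i j, SP i j = false → A i j = 0) ∧ B.IsDiag ∧ (∀ i, εb ≤ |B i i|) ∧ D.IsDiag

/-- The deadbeat subcontroller for subsystem `i`. -/
noncomputable def dbSub {n : ℕ} (i : Fin n) (Ai : Fin n → ℝ) (bii dii : ℝ) : SubCtrl n where
  σ := Fin 1
  fin := inferInstance
  dec := inferInstance
  AK := fun _ _ => dii
  BK := fun _ j => -(bii⁻¹ * dii ^ 2) * (if j = i then 1 else 0)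
  CK := fun _ => 1
  DK := fun j => -bii⁻¹ * (Ai j + (if j = i then dii else 0))

/-- The deadbeat control design strategy `Γ^Δ`. -/
noncomputable def dbStrat (n : ℕ) : Strat n := fun i Ai bii dii => dbSub i Ai bii dii

/-- Static controller cancelling row `i` of `A`. -/
noncomputable def deadI {n : ℕ} (A B : Matrix (Fin n) (Fin n) ℝ) (i : Fin n) : Ctrl n where
  σ := Fin 0
  fin := inferInstance
  dec := inferInstance
  AK := 0
  BK := 0
  CK := 0
  DK := fun p q => if p = i then -(A i q) / B i i else 0

lemma diag_mulVec {n : ℕ} {B : Matrix (Fin n) (Fin n) ℝ} (hB : B.IsDiag) (v : Fin n → ℝ)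
    (p : Fin n) : (B *ᵥ v) p = B p p * v p := by
  rw [Matrix.mulVec, dotProduct, Finset.sum_eq_single p]
  · intro q _ hq
    rw [hB hq.symm, zero_mul]
  · simp

lemma mulVec_e {n : ℕ} (N : Matrix (Fin n) (Fin n) ℝ) (j p : Fin n) :
    (N *ᵥ Pi.single j 1) p = N p j := by
  simp

lemma xTraj_eq {n : ℕ} (K : Ctrl n) (A B D : Matrix (Fin n) (Fin n) ℝ) (x0 w0 : Fin n → ℝ)
    (k : ℕ) : xTraj A B D x0 w0 (ctrlU K A B D x0 w0) k = (clState K A B D x0 w0 k).1 := by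
  induction k with
  | zero => rfl
  | succ k ih => rw [xTraj, ih]; rfl

/-- **Lemma 6 (lem:2).** If node `i` is not a sink of the plant graph and the limited model
information strategy `Γ` (with totally disconnected design graph) produces, for some
admissible `(A,B,D)` and some `j ≠ i`, a feedthrough with `a_ij + b_ii (d_Γ)_ij ≠ 0`, then
the competitive ratio of `Γ` is unbounded: for every `c > 0` there are an admissible plant
and a controller `K ∈ 𝒦(S_K)` with `J_{P'}(Γ(A',B',D')) > c · J_{P'}(K)`. -/
theorem nonsink_feedthrough_unbounded_ratio (n : ℕ) (hn : 2 ≤ n) (εb : ℝ) (hεb : 0 < εb)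
    (SP SK : Fin n → Fin n → Bool)
    (hnoiso : ∀ i : Fin n, ∃ j : Fin n, j ≠ i ∧ (SP i j = true ∨ SP j i = true))
    (hsup : ∀ i j, SP i j = true → SK i j = true)
    (hself : ∀ i, SK i i = true)
    (i : Fin n) (hnotsink : ∃ l : Fin n, l ≠ i ∧ SP l i = true)
    (Γ : Strat n)
    (hΓmem : ∀ A B D : Matrix (Fin n) (Fin n) ℝ, Adm SP εb A B D →
      memK SK (applyStrat Γ A B D))
    (hbad : ∃ (A B D : Matrix (Fin n) (Fin n) ℝ) (j : Fin n), Adm SP εb A B D ∧ j ≠ i ∧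
      A i j + B i i * (applyStrat Γ A B D).DK i j ≠ 0) :
    ∀ c : ℝ, 0 < c →
      ∃ (A' B' D' : Matrix (Fin n) (Fin n) ℝ) (x0' w0' : Fin n → ℝ) (K : Ctrl n),
        Adm SP εb A' B' D' ∧ memK SK K ∧
          ENNReal.ofReal c * Jcost K A' B' D' x0' w0'
            < Jcost (applyStrat Γ A' B' D') A' B' D' x0' w0' := by
  intro c hc
  obtain ⟨l, hli, hSPl⟩ := hnotsink
  obtain ⟨A, B, D, j, ⟨hA, hB, hBe, hD⟩, hji, hδ⟩ := hbad
  set δ := A i j + B i i * (applyStrat Γ A B D).DK i j with hδdef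
  have hBi : B i i ≠ 0 := by
    intro h
    have := hBe i
    rw [h, abs_zero] at this
    linarith
  set x0 : Fin n → ℝ := Pi.single j 1 with hx0
  set K := deadI A B i with hK
  set M : ℝ := (∑ p, (x0 p) ^ 2) + ∑ p, ((K.DK *ᵥ x0) p) ^ 2 with hM
  have hM0 : 0 ≤ M := by positivity
  set T : ℝ := c * M * (1 + (B l l) ^ 2) + 1 with hT
  have hT1 : 1 ≤ T := by
    have : 0 ≤ c * M * (1 + (B l l) ^ 2) := by positivity
    linarith
  set A' : Matrix (Fin n) (Fin n) ℝ := fun p q =>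
    if p = i then A i q else if p = l ∧ q = i then T / δ else 0 with hA'
  have hA'i : A' i = A i := by
    funext q
    simp [hA']
  refine ⟨A', B, D, x0, 0, K, ⟨?_, hB, hBe, hD⟩, ?_, ?_⟩
  · intro p q hpq
    by_cases hp : p = i
    · subst hp
      rw [hA'i]
      exact hA _ _ hpq
    · have : ¬ (p = l ∧ q = i) := by
        rintro ⟨rfl, rfl⟩
        simp [hSPl] at hpq
      simp [hA', hp, this]
  · intro p q hpq
    have hsp : SP p q = false := by
      by_contra h
      have := hsup p q (by simpa using h)
      simp [hpq] at this
    refine ⟨?_, fun t => ?_⟩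
    · by_cases hp : p = i
      · subst hp
        simp [hK, deadI, hA _ _ hsp]
      · simp [hK, deadI, hp]
    · letI := K.fin
      letI := K.dec
      refine (Matrix.mul_apply (M := K.CK * K.AK ^ t) (N := K.BK)).trans ?_
      exact Finset.sum_eq_zero (fun a _ => Fin.elim0 a)
  · have hup : Jcost K A' B D x0 0 ≤ ENNReal.ofReal M := by
      have hu : ∀ k, ctrlU K A' B D x0 0 k = K.DK *ᵥ (clState K A' B D x0 0 k).1 := by
        intro k
        funext p
        have h0 : (letI := K.fin; (K.CK *ᵥ (clState K A' B D x0 0 k).2) p) = 0 := by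
          simp only [Matrix.mulVec, dotProduct]
          exact Finset.sum_eq_zero (fun a _ => Fin.elim0 a)
        rw [ctrlU, Pi.add_apply, h0, zero_add]
      have hz : ∀ k, xTraj A' B D x0 0 (ctrlU K A' B D x0 0) (k + 1) = 0 := by
        intro k
        induction k with
        | zero =>
          simp only [xTraj, hu, clState, Matrix.mulVec_zero, add_zero]
          funext p
          rw [Pi.add_apply, diag_mulVec hB, hx0, mulVec_e, mulVec_e]
          by_cases hp : p = i
          · subst hp
            simp [hA', hK, deadI]
            field_simp
            try ring
          · simp [hA', hK, deadI, hp, hji]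
        | succ k ih =>
          rw [xTraj, hu, ← xTraj_eq, ih]
          simp
      unfold Jcost cost
      rw [tsum_eq_single 0]
      · simp [hu, xTraj, clState, hM]
      · intro k hk
        obtain ⟨k, rfl⟩ := Nat.exists_eq_succ_of_ne_zero hk
        rw [Nat.succ_eq_add_one, hz, hu, ← xTraj_eq, hz]
        simp
    set G := applyStrat Γ A' B D with hG
    have hGD : G.DK i j = (applyStrat Γ A B D).DK i j := by
      simp only [hG, applyStrat, assemble, hA'i]
    set u := ctrlU G A' B D x0 0 with hu
    set x := xTraj A' B D x0 0 u with hx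
    have h1 : x 1 i = δ := by
      have hu0 : u 0 = G.DK *ᵥ x0 := by
        simp [hu, ctrlU, clState]
      rw [hx, xTraj, Pi.add_apply, diag_mulVec hB, hu0, hδdef, ← hGD]
      rw [xTraj, hx0, mulVec_e, hA'i, Matrix.mulVec_zero, add_zero, mulVec_e]
    have h2 : x 2 l = T + B l l * u 1 l := by
      have e : x 2 = A' *ᵥ (x 1) + B *ᵥ (u 1 + (D ^ 1) *ᵥ 0) := rfl
      rw [e, Pi.add_apply, diag_mulVec hB]
      have : (A' *ᵥ (x 1)) l = T := by
        have : (A' *ᵥ (x 1)) l = T / δ * x 1 i := by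
          simp [Matrix.mulVec, dotProduct, hA', hli]
        rw [this, h1]
        field_simp
      rw [this]
      simp
    have hlow : ENNReal.ofReal ((u 1 l) ^ 2 + (x 2 l) ^ 2) ≤ Jcost G A' B D x0 0 := by
      unfold Jcost cost
      refine le_trans ?_ (ENNReal.sum_le_tsum {1, 2})
      rw [Finset.sum_pair (by norm_num), ENNReal.ofReal_add (by positivity) (by positivity)]
      refine add_le_add (ENNReal.ofReal_le_ofReal ?_) (ENNReal.ofReal_le_ofReal ?_)
      · have := Finset.single_le_sum (f := fun p => (u 1 p) ^ 2)
          (fun p _ => sq_nonneg _) (Finset.mem_univ l)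
        simp only [Matrix.mulVec_zero, Pi.zero_apply, add_zero]
        have h0 : 0 ≤ ∑ p, (x 1 p) ^ 2 := by positivity
        exact le_add_of_nonneg_of_le h0 this
      · have := Finset.single_le_sum (f := fun p => (x 2 p) ^ 2)
          (fun p _ => sq_nonneg _) (Finset.mem_univ l)
        exact le_add_of_le_of_nonneg this (by positivity)
    refine lt_of_le_of_lt (mul_le_mul_right hup _) (lt_of_lt_of_le ?_ hlow)
    rw [← ENNReal.ofReal_mul hc.le]
    have key : c * M < (u 1 l) ^ 2 + (x 2 l) ^ 2 := by
      have hb : 0 < 1 + (B l l) ^ 2 := by positivity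
      refine lt_of_mul_lt_mul_right ?_ hb.le
      have e1 : c * M * (1 + (B l l) ^ 2) < T ^ 2 := by nlinarith
      have e2 : T = x 2 l - B l l * u 1 l := by linarith
      have e3 : T ^ 2 ≤ ((u 1 l) ^ 2 + (x 2 l) ^ 2) * (1 + (B l l) ^ 2) := by
        rw [e2]
        nlinarith [sq_nonneg (B l l * x 2 l + u 1 l)]
      linarith
    refine (ENNReal.ofReal_lt_ofReal_iff ?_).2 key
    exact lt_of_le_of_lt (by positivity) key
end
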